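/- Let f ∈ k[X_1,…,X_r] be an irreducible polynomial (r ≥ 1). Then: (a) there exists m ∈ ℤ^r with τ_m f ≠ f, i.e. Ξ_f is a proper subgroup of ℤ^r; and (b) for every m ∈ ℤ^r and every integer n ≥ 1, if τ_{n·m} f = f then τ_m f = f. Consequently the quotient group ℤ^r/Ξ_f is a torsion-free (hence free) finitely generated abelian group of positive rank. -/

import Mathlib

/-!
In characteristic zero, `τ_m f = f` says that the function `x ↦ f(x)` has period `m`. For fixed `x`
the function `t ↦ f(x + t m)` is a univariate polynomial; if `n m` is a period of `f` with `n ≠ 0`,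
it has period `n`, hence takes one value at infinitely many points and is constant. Comparing
`t = 0` with `t = 1` shows that `m` is a period. If all of `ℤ^r` were periods, then `f` would be
constant on `ℤ^r`, which is Zariski dense, whereas an irreducible polynomial
over a field is not constant.
-/

open MvPolynomial

noncomputable section

/-- Translation of a polynomial: `(τ_m f)(X) = f(X₁ + m₁, …, X_r + m_r)`. -/
def polyTranslate (k : Type*) [CommRing k] {r : ℕ} (m : Fin r → ℤ) :
    MvPolynomial (Fin r) k →ₐ[k] MvPolynomial (Fin r) k :=
  aeval fun i => X i + C ((m i : ℤ) : k)

theorem totalDegree_ne_zero_of_irreducible {σ k : Type*} [Field k] {f : MvPolynomial σ k}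
    (hf : Irreducible f) : f.totalDegree ≠ 0 := by
  intro h
  have eq_const : f = C (coeff 0 f) := totalDegree_eq_zero_iff_eq_C.mp h
  have coeff_ne_zero : coeff 0 f ≠ 0 := fun h₀ => hf.ne_zero (by rw [eq_const, h₀, C_0])
  exact hf.not_isUnit (eq_const ▸ coeff_ne_zero.isUnit.map C)

section Lines

variable {σ R : Type*}

/-- The univariate polynomial `f(x + T a)`, the restriction of `f` to the line through `x` with
direction vector `a`. -/
def restrictLine [CommSemiring R] (x a : σ → R) : MvPolynomial σ R →ₐ[R] Polynomial R :=
  aeval fun i => Polynomial.C (x i) + Polynomial.X * Polynomial.C (a i)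

theorem eval_restrictLine [CommSemiring R] (x a : σ → R) (t : R) (f : MvPolynomial σ R) :
    (restrictLine x a f).eval t = eval (x + t • a) f := by
  induction f using MvPolynomial.induction_on with
  | C c => simp [restrictLine]
  | add p q hp hq => simp [hp, hq]
  | mul_X p i hp =>
    rw [map_mul, map_mul, Polynomial.eval_mul, hp]
    simp [restrictLine, mul_comm t]

variable [CommRing R] [IsDomain R] [CharZero R]

theorem polynomial_eq_C_of_periodic {p : Polynomial R} {c : R} (hc : c ≠ 0)
    (hp : Function.Periodic (fun t => p.eval t) c) : p = Polynomial.C (p.eval 0) := by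
  have infinite_multiples : (Set.range fun n : ℕ => n * c).Infinite :=
    Set.infinite_range_of_injective ((mul_left_injective₀ hc).comp Nat.cast_injective)
  refine Polynomial.eq_of_infinite_eval_eq _ _ (infinite_multiples.mono ?_)
  rintro _ ⟨n, rfl⟩
  simpa using hp.nat_mul_eq n

theorem periodic_eval_of_periodic_eval_smul {f : MvPolynomial σ R} {a : σ → R} {c : R}
    (hc : c ≠ 0) (hf : Function.Periodic (fun x => eval x f) (c • a)) :
    Function.Periodic (fun x => eval x f) a := by
  intro x
  have periodic_restrictLine : Function.Periodic (fun t => (restrictLine x a f).eval t) c := by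
    intro t
    simpa only [eval_restrictLine, add_smul, add_assoc] using hf (x + t • a)
  have eval_one_eq_eval_zero : (restrictLine x a f).eval 1 = (restrictLine x a f).eval 0 := by
    rw [polynomial_eq_C_of_periodic hc periodic_restrictLine, Polynomial.eval_C, Polynomial.eval_C]
  simpa [eval_restrictLine] using eval_one_eq_eval_zero

theorem eq_of_eval_intCast_eq {f g : MvPolynomial σ R}
    (h : ∀ m : σ → ℤ, eval (fun i => (m i : R)) f = eval (fun i => (m i : R)) g) : f = g := by
  refine funext_set (fun _ => Set.range ((↑) : ℤ → R))
    (fun _ => Set.infinite_range_of_injective Int.cast_injective) fun x hx => ?_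
  choose m hm using fun i => hx i (Set.mem_univ i)
  obtain rfl : (fun i => (m i : R)) = x := funext hm
  exact h m

end Lines

section Translation

variable {k : Type*} [CommRing k] {r : ℕ}

theorem eval_polyTranslate (m : Fin r → ℤ) (x : Fin r → k) (f : MvPolynomial (Fin r) k) :
    eval x (polyTranslate k m f) = eval (x + fun i => (m i : k)) f := by
  induction f using MvPolynomial.induction_on with
  | C c => simp [polyTranslate, algebraMap_eq]
  | add p q hp hq => simp only [map_add, hp, hq]
  | mul_X p i hp =>
    rw [map_mul, map_mul, map_mul, hp]
    simp [polyTranslate]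

theorem polyTranslate_eq_self_iff_periodic [IsDomain k] [Infinite k] {m : Fin r → ℤ}
    {f : MvPolynomial (Fin r) k} :
    polyTranslate k m f = f ↔ Function.Periodic (fun x => eval x f) fun i => (m i : k) := by
  simp only [MvPolynomial.funext_iff, eval_polyTranslate, Function.Periodic]

variable [IsDomain k] [CharZero k]

theorem totalDegree_eq_zero_of_forall_polyTranslate_eq_self {f : MvPolynomial (Fin r) k}
    (h : ∀ m, polyTranslate k m f = f) : f.totalDegree = 0 := by
  have eq_const : f = C (eval 0 f) := eq_of_eval_intCast_eq fun m => by
    rw [eval_C, ← zero_add fun i => (m i : k), ← eval_polyTranslate, h m]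
  rw [eq_const, totalDegree_C]

theorem polyTranslate_eq_self_of_zsmul {f : MvPolynomial (Fin r) k} {m : Fin r → ℤ} {n : ℤ}
    (hn : n ≠ 0) (h : polyTranslate k (n • m) f = f) : polyTranslate k m f = f := by
  have : Infinite k := .of_injective _ (Nat.cast_injective (R := k))
  rw [polyTranslate_eq_self_iff_periodic] at h ⊢
  refine periodic_eval_of_periodic_eval_smul (Int.cast_ne_zero.mpr hn) ?_
  convert! h using 2 with i
  simp

theorem irreducible_translation_group_general (f : MvPolynomial (Fin r) k) :
    (f.totalDegree ≠ 0 → ∃ m : Fin r → ℤ, polyTranslate k m f ≠ f) ∧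
    ∀ (m : Fin r → ℤ) (n : ℤ), n ≠ 0 → polyTranslate k (n • m) f = f → polyTranslate k m f = f :=
  ⟨fun hf => by
    contrapose! hf
    exact totalDegree_eq_zero_of_forall_polyTranslate_eq_self hf,
  fun _ _ => polyTranslate_eq_self_of_zsmul⟩

end Translation

theorem irreducible_translation_group (k : Type*) [Field k] [CharZero k] {r : ℕ}
    (hr : 1 ≤ r) (f : MvPolynomial (Fin r) k) (hf : Irreducible f) :
    -- (a) Ξ_f is a proper subgroup of ℤ^r
    (∃ m : Fin r → ℤ, polyTranslate k m f ≠ f) ∧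
    -- (b) ℤ^r/Ξ_f is torsion-free
    (∀ (m : Fin r → ℤ) (n : ℤ), 1 ≤ n →
      polyTranslate k (fun i => n * m i) f = f → polyTranslate k m f = f) := by
  obtain ⟨exists_ne, torsion_free⟩ := irreducible_translation_group_general f
  exact ⟨exists_ne (totalDegree_ne_zero_of_irreducible hf), fun m n hn => torsion_free m n (by lia)⟩
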